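/- For every a ∈ ℤ/Mℤ, #{(i, j) ∈ T_2 × T_3 : i − j = a} − #{(i, j) ∈ T_3 × T_3 : i − j = a} equals −2^{2s−1}·[a = 0] + 2^{s−1}·(1 − [a ∈ T_1]), where [P] is 1 if P holds and 0 otherwise; that is, (T_2 − T_3)·T_3^{(−1)} = −2^{2s−1} + 2^{s−1}(ℤ/Mℤ − T_1) in the group ring ℤ[ℤ/Mℤ]. -/

import Mathlib

noncomputable section

open scoped BigOperators

/-- `M = 2^{2s} + 2^s + 1`. -/
abbrev Mof (s : ℕ) : ℕ := 2 ^ (2 * s) + 2 ^ s + 1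

/-- The relative trace from `F` (of order `2^{3s}`) to its subfield `E` of order `2^s`:
`Tr_{F/E}(x) = x + x^{2^s} + x^{2^{2s}}`, viewed as a map `F → F`. -/
def trFE {F : Type*} [Field F] (s : ℕ) (x : F) : F :=
  x + x ^ (2 ^ s) + x ^ (2 ^ (2 * s))

/-- `ψ(x) = 1` if the absolute trace `Tr_{F/𝔽₂}(x) = 0`, and `-1` otherwise. -/
def psi (F : Type*) [Field F] [Algebra (ZMod 2) F] (x : F) : ℤ :=
  if Algebra.trace (ZMod 2) F x = 0 then 1 else -1

/-- `ψ(cS) = ∑_{x ∈ S} ψ(c·x)`. -/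
def psiSum (F : Type*) [Field F] [Algebra (ZMod 2) F] (c : F) (S : Set F) : ℤ :=
  ∑ᶠ x ∈ S, psi F (c * x)

/-- `D = {u ∈ F^× : Tr_{F/E}(u⁻¹) = 0}`. -/
def Dset (F : Type*) [Field F] (s : ℕ) : Set F :=
  {u | u ≠ 0 ∧ trFE s u⁻¹ = 0}

/-- `S_a = {u ∈ F^× : Tr_{F/E}(u^{2^s+1}) = 0 ∧ Tr_{F/E}(ω^a u) = 0}`. -/
def Sa {F : Type*} [Field F] (s : ℕ) (ω : F) (a : ℤ) : Set F :=
  {u | u ≠ 0 ∧ trFE s (u ^ (2 ^ s + 1)) = 0 ∧ trFE s (ω ^ a * u) = 0}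

/-- `T₁ ⊆ ℤ/Mℤ`: classes `a` with `|S_a| = 2^s - 1`. -/
def T1 {F : Type*} [Field F] (s : ℕ) (ω : F) : Set (ZMod (Mof s)) :=
  {x | (Sa s ω (x.val : ℤ)).ncard = 2 ^ s - 1}

/-- `T₂ ⊆ ℤ/Mℤ`: classes `a` with `|S_a| = 2(2^s - 1)`. -/
def T2 {F : Type*} [Field F] (s : ℕ) (ω : F) : Set (ZMod (Mof s)) :=
  {x | (Sa s ω (x.val : ℤ)).ncard = 2 * (2 ^ s - 1)}

/-- `T₃ ⊆ ℤ/Mℤ`: classes `a` with `|S_a| = 0`. -/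
def T3 {F : Type*} [Field F] (s : ℕ) (ω : F) : Set (ZMod (Mof s)) :=
  {x | (Sa s ω (x.val : ℤ)).ncard = 0}

/-- The cyclotomic class `C_i^{(M,K)} = {g^{i+Mt} : t ∈ ℤ}`. -/
def cyc {K : Type*} [Field K] (M : ℕ) (g : K) (i : ℤ) : Set K :=
  {x | ∃ t : ℤ, x = g ^ (i + (M : ℤ) * t)}

/-- `⋃_{i ∈ T} C_i^{(M,K)}` for a set `T ⊆ ℤ/Mℤ` of indices. -/
def Rclass {K : Type*} [Field K] (s : ℕ) (g : K) (T : Set (ZMod (Mof s))) : Set K :=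
  ⋃ i ∈ T, cyc (Mof s) g ((i.val : ℤ))

/-- The family `R_0 = {0}`, `R_k = ⋃_{i ∈ T_k} C_i^{(M,K)}`, `k = 1, 2, 3`. -/
def Rfam {F K : Type*} [Field F] [Field K] (s : ℕ) (ω : F) (g : K) : Fin 4 → Set K :=
  ![{0}, Rclass s g (T1 s ω), Rclass s g (T2 s ω), Rclass s g (T3 s ω)]

/-- Indicator `[P] = 1` if `P` holds, `0` otherwise. -/
def Ind (P : Prop) : ℤ := @ite ℤ P (Classical.propDecidable P) 1 0

/-!
Let `q = 2 ^ s`. The group `Fˣ / Eˣ ≅ ℤ/M` is a projective plane of order `q`, and its line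
`Tr = 0` is Singer's planar difference set `D`; since `Tr (u ^ 2) = (Tr u) ^ 2`, it is closed under
doubling. As `Tr (u ^ (q + 1)) = N(u) * Tr u⁻¹`, the number `|S_a| / (q - 1)` counts the
representations of `a` as an ordered sum of two elements of `D`. By planarity a sum determines its
summands up to order, and doubling permutes `D`, so this count is `1` on `D` and `0` or `2` off `D`.
Hence `T₁ = D`, `T₂ - T₃ = D² - G` and `2 T₃ = 2 G - D - D²` in the group ring of `G = ℤ/M`, and
the identity follows by expanding the product with `D * D⁻¹ = q + G`.
-/

section FormalSum

variable {G : Type*}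

/-- The element `∑_{g ∈ A} g` of the group ring `ℤ[G]`, by which group-ring identities
denote the set `A` itself. -/
def formalSum (A : Finset G) : AddMonoidAlgebra ℤ G := ∑ g ∈ A, AddMonoidAlgebra.single g 1

theorem coeff_formalSum [DecidableEq G] (A : Finset G) (a : G) :
    (formalSum A).coeff a = if a ∈ A then 1 else 0 := by
  simp [formalSum, AddMonoidAlgebra.coeff_sum, Finsupp.single_apply]

variable [AddCommGroup G]

theorem coeff_formalSum_mul [DecidableEq G] (A B : Finset G) (a : G) :
    (formalSum A * formalSum B).coeff a = A.addConvolution B a := by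
  simp [formalSum, Finset.sum_mul_sum, ← Finset.sum_product', AddMonoidAlgebra.single_mul_single,
    AddMonoidAlgebra.coeff_sum, Finsupp.single_apply, Finset.addConvolution]

theorem formalSum_mul_univ [Fintype G] (A : Finset G) :
    formalSum A * formalSum Finset.univ = (A.card : ℤ) • formalSum Finset.univ := by
  classical
  ext a
  rw [coeff_formalSum_mul, AddMonoidAlgebra.coeff_smul_apply, coeff_formalSum]
  simp

end FormalSum

section PlanarDifferenceSet

open scoped Pointwise

variable {G : Type*} [AddCommGroup G]

theorem ncard_setOf_sub_eq [DecidableEq G] (A B : Finset G) (a : G) :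
    {p : G × G | p.1 ∈ A ∧ p.2 ∈ B ∧ p.1 - p.2 = a}.ncard = A.addConvolution (-B) a := by
  rw [← Finset.card_sub_eq, ← Set.ncard_coe_finset]
  congr 1
  ext p
  simp [and_assoc]

/-- A planar difference set (`λ = 1`): every nonzero element is a difference of two elements
of `D` in exactly one way. -/
def IsPlanarDifferenceSet (D : Finset G) : Prop :=
  ∀ d : G, d ≠ 0 → ∃! p : G × G, p ∈ D ×ˢ D ∧ p.1 - p.2 = d

namespace IsPlanarDifferenceSet

variable {D : Finset G}

theorem eq_or_eq_of_add_eq_add (hD : IsPlanarDifferenceSet D) {x y z w : G}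
    (hx : x ∈ D) (hy : y ∈ D) (hz : z ∈ D) (hw : w ∈ D) (h : x + y = z + w) :
    (x, y) = (z, w) ∨ (x, y) = (w, z) := by
  by_cases hxz : x = z
  · subst hxz
    exact .inl (by rw [add_left_cancel h])
  · have hdiff : w - y = x - z := by rw [sub_eq_sub_iff_add_eq_add, h, add_comm]
    have hpair : (x, z) = (w, y) := (hD (x - z) (sub_ne_zero.2 hxz)).unique
      ⟨Finset.mk_mem_product hx hz, rfl⟩ ⟨Finset.mk_mem_product hw hy, hdiff⟩
    simp only [Prod.mk.injEq] at hpair ⊢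
    exact .inr ⟨hpair.1, hpair.2.symm⟩

variable [DecidableEq G]

theorem addConvolution_neg_self (hD : IsPlanarDifferenceSet D) {d : G} (hd : d ≠ 0) :
    D.addConvolution (-D) d = 1 := by
  rw [← Finset.card_sub_eq, Finset.card_eq_one, Finset.singleton_iff_unique_mem]
  simpa only [Finset.mem_filter] using hD d hd

theorem addConvolution_self_of_mem (hD : IsPlanarDifferenceSet D)
    (hdouble : ∀ x ∈ D, x + x ∈ D) {a : G} (ha : a ∈ D) : D.addConvolution D a = 1 := by
  have hinj : Set.InjOn (fun x => x + x) (D : Set G) := fun x hx y hy hxy => by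
    rcases hD.eq_or_eq_of_add_eq_add hx hx hy hy hxy with h | h <;> exact congrArg Prod.fst h
  obtain ⟨x, hx, rfl⟩ :=
    Finset.surjOn_of_injOn_of_card_le (fun x => x + x) hdouble hinj le_rfl ha
  refine Finset.card_eq_one.2 ⟨(x, x), Finset.eq_singleton_iff_unique_mem.2 ⟨?_, ?_⟩⟩
  · simp only [Finset.mem_filter, Finset.mem_product]
    exact ⟨⟨hx, hx⟩, trivial⟩
  · rintro ⟨y, z⟩ hyz
    simp only [Finset.mem_filter, Finset.mem_product] at hyz
    simpa using hD.eq_or_eq_of_add_eq_add hyz.1.1 hyz.1.2 hx hx hyz.2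

theorem addConvolution_self_of_notMem (hD : IsPlanarDifferenceSet D)
    (hdouble : ∀ x ∈ D, x + x ∈ D) {a : G} (ha : a ∉ D) :
    D.addConvolution D a = 0 ∨ D.addConvolution D a = 2 := by
  refine or_iff_not_imp_left.2 fun hne => ?_
  obtain ⟨x, hx, y, hy, rfl⟩ := Finset.mem_add.1 (Finset.addConvolution_ne_zero.1 hne)
  have hxy : x ≠ y := by
    rintro rfl
    exact ha (hdouble x hx)
  refine Finset.card_eq_two.2 ⟨(x, y), (y, x), fun h => hxy (congrArg Prod.fst h), ?_⟩
  ext ⟨z, w⟩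
  simp only [Finset.mem_filter, Finset.mem_product, Finset.mem_insert, Finset.mem_singleton]
  constructor
  · rintro ⟨⟨hz, hw⟩, h⟩
    exact hD.eq_or_eq_of_add_eq_add hz hw hx hy h
  · rintro (h | h) <;> obtain ⟨rfl, rfl⟩ := Prod.mk.inj h
    exacts [⟨⟨hx, hy⟩, rfl⟩, ⟨⟨hy, hx⟩, add_comm _ _⟩]

theorem addConvolution_self_eq_one_iff (hD : IsPlanarDifferenceSet D)
    (hdouble : ∀ x ∈ D, x + x ∈ D) {a : G} : D.addConvolution D a = 1 ↔ a ∈ D := by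
  refine ⟨fun h => ?_, hD.addConvolution_self_of_mem hdouble⟩
  by_contra ha
  have := hD.addConvolution_self_of_notMem hdouble ha
  omega

variable [Fintype G]

theorem formalSum_mul_neg (hD : IsPlanarDifferenceSet D) :
    formalSum D * formalSum (-D) = (D.card - 1 : ℤ) • 1 + formalSum Finset.univ := by
  ext d
  rw [coeff_formalSum_mul, AddMonoidAlgebra.coeff_add, Finsupp.add_apply, coeff_formalSum,
    AddMonoidAlgebra.coeff_smul_apply, AddMonoidAlgebra.one_def, AddMonoidAlgebra.coeff_single,
    Finsupp.single_apply]
  by_cases hd : d = 0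
  · subst hd
    simp [← Finset.card_inter_vadd]
  · simp [hD.addConvolution_neg_self hd, Ne.symm hd]

omit [DecidableEq G] in
theorem card_mul_card (hD : IsPlanarDifferenceSet D) :
    (D.card * D.card : ℤ) = D.card - 1 + Fintype.card G := by
  classical
  have h := congrArg (· * formalSum Finset.univ) hD.formalSum_mul_neg
  simp only [mul_assoc, add_mul, formalSum_mul_univ, mul_smul_comm, smul_mul_assoc, one_mul,
    Finset.card_neg, Finset.card_univ] at h
  have hcoeff := congrArg (·.coeff 0) h
  simpa only [AddMonoidAlgebra.coeff_add, Finsupp.add_apply, AddMonoidAlgebra.coeff_smul_apply,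
    coeff_formalSum, Finset.mem_univ, if_true, smul_eq_mul, mul_one] using hcoeff

omit [DecidableEq G] in
theorem card_eq_add_one (hD : IsPlanarDifferenceSet D) {q : ℕ} (hq : 0 < q)
    (hG : Fintype.card G = q ^ 2 + q + 1) : D.card = q + 1 := by
  have h := hD.card_mul_card
  rw [hG] at h
  push_cast at h
  have hfactor : (D.card - (q + 1) : ℤ) * (D.card + q) = 0 := by linear_combination h
  rcases mul_eq_zero.1 hfactor with h | h <;> omega

end IsPlanarDifferenceSet

/-- The elements of `G` with exactly `k` representations as an ordered sum of two elements
of `D`. -/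
def sumMultiplicity [DecidableEq G] [Fintype G] (D : Finset G) (k : ℕ) : Finset G :=
  {a | D.addConvolution D a = k}

namespace IsPlanarDifferenceSet

variable [DecidableEq G] [Fintype G] {D : Finset G}

theorem mem_sumMultiplicity_one (hD : IsPlanarDifferenceSet D)
    (hdouble : ∀ x ∈ D, x + x ∈ D) {a : G} : a ∈ sumMultiplicity D 1 ↔ a ∈ D := by
  simp [sumMultiplicity, hD.addConvolution_self_eq_one_iff hdouble]

theorem formalSum_sumMultiplicity_two_sub_zero (hD : IsPlanarDifferenceSet D)
    (hdouble : ∀ x ∈ D, x + x ∈ D) :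
    formalSum (sumMultiplicity D 2) - formalSum (sumMultiplicity D 0) =
      formalSum D * formalSum D - formalSum Finset.univ := by
  ext a
  simp only [AddMonoidAlgebra.coeff_sub, Finsupp.sub_apply, coeff_formalSum, coeff_formalSum_mul,
    sumMultiplicity, Finset.mem_filter, Finset.mem_univ, true_and]
  by_cases ha : a ∈ D
  · simp [hD.addConvolution_self_of_mem hdouble ha]
  · rcases hD.addConvolution_self_of_notMem hdouble ha with h | h <;> simp [h]

theorem two_mul_formalSum_neg_sumMultiplicity_zero (hD : IsPlanarDifferenceSet D)
    (hdouble : ∀ x ∈ D, x + x ∈ D) :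
    2 * formalSum (-sumMultiplicity D 0) =
      2 * formalSum Finset.univ - formalSum (-D) - formalSum (-D) * formalSum (-D) := by
  ext a
  simp only [two_mul, AddMonoidAlgebra.coeff_sub, AddMonoidAlgebra.coeff_add, Finsupp.sub_apply,
    Finsupp.add_apply, coeff_formalSum, coeff_formalSum_mul, sumMultiplicity, Finset.mem_neg',
    Finset.mem_filter, Finset.mem_univ, true_and, ← Finset.addConvolution_neg]
  by_cases ha : -a ∈ D
  · simp [hD.addConvolution_self_of_mem hdouble ha, ha]
  · rcases hD.addConvolution_self_of_notMem hdouble ha with h | h <;> simp [h, ha]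

theorem two_mul_formalSum_sumMultiplicity_sub_mul_neg (hD : IsPlanarDifferenceSet D)
    (hdouble : ∀ x ∈ D, x + x ∈ D) :
    2 * ((formalSum (sumMultiplicity D 2) - formalSum (sumMultiplicity D 0)) *
        formalSum (-sumMultiplicity D 0)) =
      (D.card - 1 : ℤ) • (formalSum Finset.univ - formalSum D)
        - (D.card - 1 : ℤ) ^ 2 • (1 : AddMonoidAlgebra ℤ G) := by
  rw [mul_left_comm, hD.two_mul_formalSum_neg_sumMultiplicity_zero hdouble,
    hD.formalSum_sumMultiplicity_two_sub_zero hdouble]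
  have hDneg := hD.formalSum_mul_neg
  have hDuniv := formalSum_mul_univ D
  have hDnegUniv := formalSum_mul_univ (-D)
  have hunivUniv := formalSum_mul_univ (Finset.univ : Finset G)
  have hcard := congrArg (Int.cast : ℤ → AddMonoidAlgebra ℤ G) hD.card_mul_card
  simp only [zsmul_eq_mul, Finset.card_neg, Finset.card_univ, Int.cast_mul, Int.cast_add,
    Int.cast_sub, Int.cast_pow, Int.cast_one, Int.cast_natCast]
    at hDneg hDuniv hDnegUniv hunivUniv hcard ⊢
  set U : AddMonoidAlgebra ℤ G := formalSum Finset.univ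
  set n := (D.card : AddMonoidAlgebra ℤ G)
  have hDDuniv : formalSum D * formalSum D * U = n ^ 2 * U := by
    linear_combination (formalSum D + n) * hDuniv
  have hDDneg : formalSum D * formalSum D * formalSum (-D) = (n - 1) * formalSum D + n * U := by
    linear_combination formalSum D * hDneg + hDuniv
  have hDDnegneg : formalSum D * formalSum D * (formalSum (-D) * formalSum (-D)) =
      (n - 1) ^ 2 + 2 * (n - 1) * U + Fintype.card G * U := by
    linear_combination (formalSum D * formalSum (-D) + (n - 1) + U) * hDneg + hunivUniv
  have hnegnegUniv : U * (formalSum (-D) * formalSum (-D)) = n ^ 2 * U := by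
    linear_combination (formalSum (-D) + n) * hDnegUniv
  linear_combination 2 * hDDuniv - hDDneg - hDDnegneg - 2 * hunivUniv + hDnegUniv + hnegnegUniv +
    3 * U * hcard

theorem two_mul_addConvolution_sumMultiplicity_sub (hD : IsPlanarDifferenceSet D)
    (hdouble : ∀ x ∈ D, x + x ∈ D) (a : G) :
    2 * (((sumMultiplicity D 2).addConvolution (-sumMultiplicity D 0) a : ℤ) -
        (sumMultiplicity D 0).addConvolution (-sumMultiplicity D 0) a) =
      (D.card - 1) * (1 - if a ∈ D then 1 else 0) -
        (D.card - 1) ^ 2 * if a = 0 then 1 else 0 := by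
  have h := congrArg (·.coeff a) (hD.two_mul_formalSum_sumMultiplicity_sub_mul_neg hdouble)
  simp only [sub_mul, two_mul, AddMonoidAlgebra.coeff_add, AddMonoidAlgebra.coeff_sub,
    Finsupp.add_apply, Finsupp.sub_apply, coeff_formalSum_mul, AddMonoidAlgebra.coeff_smul_apply,
    coeff_formalSum, AddMonoidAlgebra.one_def, AddMonoidAlgebra.coeff_single,
    Finsupp.single_apply, smul_eq_mul, Finset.mem_univ, if_true, eq_comm (a := (0 : G))] at h
  linear_combination h

end IsPlanarDifferenceSet

end PlanarDifferenceSet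

section DiscreteLog

theorem ncard_preimage_addMonoidHom {A B : Type*} [AddGroup A] [Finite A] [AddGroup B]
    (f : A →+ B) (hf : Function.Surjective f) (S : Finset B) :
    (f ⁻¹' (S : Set B)).ncard = Nat.card f.ker * S.card := by
  have hfiber (b : B) : Nat.card {a // f a = b} = Nat.card f.ker :=
    Nat.card_congr (AddMonoidHom.fiberEquivKerOfSurjective hf b)
  rw [← Nat.card_coe_set_eq, Finset.card_preimage_eq_sum_card_image_eq fun _ _ => Set.toFinite _,
    Finset.sum_congr rfl fun b _ => hfiber b, Finset.sum_const, smul_eq_mul, mul_comm]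

variable {G : Type*} [Group G] {g : G} (hg : ∀ x, x ∈ Subgroup.zpowers g) {M : ℕ}
  (hM : M ∣ Nat.card G)

/-- The discrete logarithm to the base `g`, reduced modulo a divisor `M` of the group order. -/
def discreteLog : Additive G →+ ZMod M :=
  (ZMod.castHom hM (ZMod M)).toAddMonoidHom.comp
    (zmodAddEquivOfGenerator (G := Additive G) hg (n := Nat.card G) rfl).symm.toAddMonoidHom

theorem discreteLog_zpow (k : ℤ) : discreteLog hg hM (.ofMul (g ^ k)) = k := by
  change ZMod.castHom hM (ZMod M)
    ((zmodMulEquivOfGenerator hg (n := Nat.card G) rfl).symm (g ^ k)).toAdd = k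
  rw [zmodMulEquivOfGenerator_symm_apply_zpow, toAdd_ofAdd, map_intCast]

theorem discreteLog_surjective : Function.Surjective (discreteLog hg hM) := fun i => by
  obtain ⟨k, rfl⟩ := ZMod.intCast_surjective i
  exact ⟨_, discreteLog_zpow hg hM k⟩

variable [Finite G]

theorem discreteLog_eq_zero_iff (x : G) :
    discreteLog hg hM (.ofMul x) = 0 ↔ x ^ (Nat.card G / M) = 1 := by
  obtain ⟨k, rfl⟩ := hg x
  obtain ⟨r, hr⟩ := hM
  have hpos : 0 < M * r := hr ▸ Nat.card_pos
  have hquot : Nat.card G / M = r := by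
    rw [hr, Nat.mul_div_cancel_left r (Nat.pos_of_mul_pos_right hpos)]
  have hr0 : (r : ℤ) ≠ 0 := by exact_mod_cast (Nat.pos_of_mul_pos_left hpos).ne'
  rw [discreteLog_zpow, ZMod.intCast_zmod_eq_zero_iff_dvd, hquot, ← zpow_natCast, ← zpow_mul,
    ← orderOf_dvd_iff_zpow_eq_one, orderOf_eq_card_of_forall_mem_zpowers hg, hr, Nat.cast_mul,
    Int.mul_dvd_mul_iff_right hr0]

theorem card_ker_discreteLog : Nat.card (discreteLog hg hM).ker = Nat.card G / M := by
  have hindex : (discreteLog hg hM).ker.index = M := by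
    rw [AddSubgroup.index_ker, AddMonoidHom.range_eq_top.2 (discreteLog_surjective hg hM),
      AddSubgroup.card_top, Nat.card_zmod]
  have hcard := (discreteLog hg hM).ker.card_mul_index
  have hMpos : 0 < M := Nat.pos_of_dvd_of_pos hM Nat.card_pos
  rw [hindex] at hcard
  exact (Nat.div_eq_of_eq_mul_left hMpos hcard.symm).symm

end DiscreteLog

section CubicTrace

variable {F : Type*} [Field F] (σ : F →+* F)

/-- The relative trace of a cubic extension whose Galois group is generated by `σ`. -/
def cubicTrace (x : F) : F := x + σ x + σ (σ x)

theorem cubicTrace_mul_of_fixed {e : F} (he : σ e = e) (x : F) :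
    cubicTrace σ (e * x) = e * cubicTrace σ x := by
  simp only [cubicTrace, map_mul, he, mul_add]

theorem cubicTrace_pow_char (p : ℕ) [ExpChar F p] (x : F) :
    cubicTrace σ (x ^ p) = cubicTrace σ x ^ p := by
  simp only [cubicTrace, map_pow, add_pow_expChar]

variable {σ} (hσ : ∀ x, σ (σ (σ x)) = x)
include hσ

theorem exists_cubicTrace_eq_zero {c : F} (hc : σ c ≠ c) :
    ∃ x ≠ 0, cubicTrace σ x = 0 ∧ cubicTrace σ (c * x) = 0 := by
  -- The conjugates of `x` are, up to sign, the cross product of `(1, 1, 1)` and the conjugates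
  -- of `c`.
  refine ⟨σ (c - σ c), ?_, ?_, ?_⟩
  · rw [map_ne_zero, sub_ne_zero]
    exact hc.symm
  all_goals
    simp only [cubicTrace, map_sub, map_mul, hσ]
    ring

theorem mul_map_eq_mul_map_of_cubicTrace_eq_zero {c x y : F} (hc : σ c ≠ c)
    (hx : cubicTrace σ x = 0) (hcx : cubicTrace σ (c * x) = 0)
    (hy : cubicTrace σ y = 0) (hcy : cubicTrace σ (c * y) = 0) : x * σ y = y * σ x := by
  have hne : c - σ (σ c) ≠ 0 := fun h => hc <| by
    rw [sub_eq_zero.1 h, hσ, ← sub_eq_zero.1 h]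
  simp only [cubicTrace, map_mul] at hx hcx hy hcy
  refine mul_left_cancel₀ hne ?_
  linear_combination σ y * (hcx - σ (σ c) * hx) - σ x * (hcy - σ (σ c) * hy)

theorem cubicTrace_mul_map_eq_zero_iff {u : F} (hu : u ≠ 0) :
    cubicTrace σ (u * σ u) = 0 ↔ cubicTrace σ u⁻¹ = 0 := by
  have hσu : σ u ≠ 0 := by simpa using hu
  have hσσu : σ (σ u) ≠ 0 := by simpa using hu
  have hnorm : cubicTrace σ (u * σ u) = u * σ u * σ (σ u) * cubicTrace σ u⁻¹ := by
    simp only [cubicTrace, map_mul, map_inv₀, hσ]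
    field_simp
    ring
  simp [hnorm, hu]

end CubicTrace

section TraceZeroSet

open scoped Pointwise

variable {F G : Type*} [Field F] [AddCommGroup G] {σ : F →+* F} {φ : Additive Fˣ →+ G}

theorem map_eq_map_iff_mul_map_eq (hker : ∀ u : Fˣ, φ (.ofMul u) = 0 ↔ σ u = u) (x y : Fˣ) :
    φ (.ofMul x) = φ (.ofMul y) ↔ (x * σ y : F) = y * σ x := by
  rw [← sub_eq_zero, ← map_sub, ← ofMul_div, hker, Units.val_div_eq_div_val, map_div₀,
    div_eq_div_iff (by simp) (by simp), mul_comm, eq_comm]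

variable [Fintype G]

variable (σ φ) in
open scoped Classical in
/-- The image in `G` of the units of trace zero. When `φ` is the quotient of `Fˣ` by the units
of the fixed field of `σ`, this is a line of the projective plane `G`: Singer's difference set. -/
def traceZeroSet : Finset G := {g | ∃ u : Fˣ, cubicTrace σ u = 0 ∧ φ (.ofMul u) = g}

variable (hker : ∀ u : Fˣ, φ (.ofMul u) = 0 ↔ σ u = u)
include hker

theorem mem_traceZeroSet_iff (u : Fˣ) :
    φ (.ofMul u) ∈ traceZeroSet σ φ ↔ cubicTrace σ (u : F) = 0 := by
  simp only [traceZeroSet, Finset.mem_filter_univ]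
  refine ⟨fun ⟨v, hv, hvu⟩ => ?_, fun hu => ⟨u, hu, rfl⟩⟩
  have hfixed : σ (u / v : Fˣ) = (u / v : Fˣ) := by
    rw [← hker, ofMul_div, map_sub, hvu, sub_self]
  have h := cubicTrace_mul_of_fixed σ hfixed v
  rwa [hv, mul_zero, ← Units.val_mul, div_mul_cancel] at h

theorem nsmul_char_mem_traceZeroSet (p : ℕ) [Fact p.Prime] [CharP F p] {g : G}
    (hg : g ∈ traceZeroSet σ φ) : p • g ∈ traceZeroSet σ φ := by
  simp only [traceZeroSet, Finset.mem_filter_univ] at hg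
  obtain ⟨u, hu, rfl⟩ := hg
  rw [← map_nsmul, ← ofMul_pow, mem_traceZeroSet_iff hker, Units.val_pow_eq_pow_val,
    cubicTrace_pow_char, hu, zero_pow (Fact.out : p.Prime).ne_zero]

variable (hφ : Function.Surjective φ) (hσ : ∀ x, σ (σ (σ x)) = x)
include hφ hσ

theorem isPlanarDifferenceSet_traceZeroSet : IsPlanarDifferenceSet (traceZeroSet σ φ) := by
  intro d hd
  obtain ⟨c, rfl⟩ : ∃ c : Fˣ, φ (.ofMul c) = d := hφ d
  have hc : σ c ≠ (c : F) := mt (hker c).2 hd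
  obtain ⟨x₀, hx₀, hx, hcx⟩ := exists_cubicTrace_eq_zero hσ hc
  lift x₀ to Fˣ using hx₀.isUnit with x
  refine ⟨(φ (.ofMul (c * x)), φ (.ofMul x)), ⟨Finset.mk_mem_product ?_ ?_, ?_⟩, ?_⟩
  · rwa [mem_traceZeroSet_iff hker, Units.val_mul]
  · rwa [mem_traceZeroSet_iff hker]
  · rw [ofMul_mul, map_add, add_sub_cancel_right]
  · rintro ⟨g, h⟩ ⟨hgh, hsub⟩
    obtain ⟨y, rfl⟩ : ∃ y : Fˣ, φ (.ofMul y) = h := hφ h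
    obtain rfl : g = φ (.ofMul (c * y)) := by
      rw [ofMul_mul, map_add]
      exact eq_add_of_sub_eq hsub
    simp only [Finset.mem_product, mem_traceZeroSet_iff hker, Units.val_mul] at hgh
    have hxy : φ (.ofMul y) = φ (.ofMul x) := (map_eq_map_iff_mul_map_eq hker y x).2 <|
      mul_map_eq_mul_map_of_cubicTrace_eq_zero hσ hc hgh.2 hgh.1 hx hcx
    simp only [ofMul_mul, map_add, hxy]

theorem ncard_cubicTrace_mul_map_eq_zero_and [Finite F] [DecidableEq G] (c : Fˣ) :
    {u : F | u ≠ 0 ∧ cubicTrace σ (u * σ u) = 0 ∧ cubicTrace σ (c * u) = 0}.ncard =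
      Nat.card φ.ker *
        (traceZeroSet σ φ).addConvolution (traceZeroSet σ φ) (φ (.ofMul c)) := by
  set D := traceZeroSet σ φ
  have hmem (u : Fˣ) : φ (.ofMul c) + φ (.ofMul u) ∈ D ∧ -φ (.ofMul u) ∈ D ↔
      cubicTrace σ (c * u : F) = 0 ∧ cubicTrace σ (u * σ u : F) = 0 := by
    rw [← map_add, ← ofMul_mul, ← map_neg, ← ofMul_inv, mem_traceZeroSet_iff hker,
      mem_traceZeroSet_iff hker, Units.val_mul, Units.val_inv_eq_inv_val,
      cubicTrace_mul_map_eq_zero_iff hσ u.ne_zero]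
  have himage : {u : F | u ≠ 0 ∧ cubicTrace σ (u * σ u) = 0 ∧ cubicTrace σ (c * u) = 0} =
      (Units.val ∘ Additive.toMul) ''
        (φ ⁻¹' ((-φ (.ofMul c) +ᵥ D) ∩ -D : Finset G)) := by
    ext u
    simp only [Set.mem_ofPred_eq, Set.mem_image, Set.mem_preimage, Finset.mem_coe,
      Finset.mem_inter, Finset.mem_neg', Finset.mem_neg_vadd_finset_iff, vadd_eq_add]
    constructor
    · rintro ⟨hu, htr, hcu⟩
      lift u to Fˣ using hu.isUnit
      exact ⟨.ofMul u, (hmem u).2 ⟨hcu, htr⟩, rfl⟩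
    · rintro ⟨u, hu, rfl⟩
      obtain ⟨hcu, htr⟩ := (hmem u.toMul).1 hu
      exact ⟨u.toMul.ne_zero, htr, hcu⟩
  rw [himage, Set.ncard_image_of_injective _ (Units.val_injective.comp Additive.toMul.injective),
    ncard_preimage_addMonoidHom φ hφ, Finset.card_vadd_inter, neg_neg, neg_neg]

end TraceZeroSet

section SingerDifferenceSet

variable {F : Type*} [Field F]

theorem trFE_eq_cubicTrace [CharP F 2] (s : ℕ) (x : F) :
    trFE s x = cubicTrace (iterateFrobenius F 2 s) x := by
  simp only [trFE, cubicTrace, iterateFrobenius_def, ← pow_mul, ← pow_add, two_mul]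

theorem iterateFrobenius_units_eq_self_iff (p s : ℕ) [Fact p.Prime] [CharP F p] (u : Fˣ) :
    iterateFrobenius F p s u = (u : F) ↔ u ^ (p ^ s - 1) = 1 := by
  have hne : p ^ s ≠ 0 := pow_ne_zero s (Fact.out : p.Prime).ne_zero
  rw [iterateFrobenius_def, ← Units.val_pow_eq_pow_val, Units.val_inj, ← pow_sub_one_mul hne,
    mul_eq_right]

theorem iterateFrobenius_thrice_eq_self [Fintype F] {p s : ℕ} [Fact p.Prime] [CharP F p]
    (hF : Fintype.card F = p ^ (3 * s)) (x : F) :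
    iterateFrobenius F p s (iterateFrobenius F p s (iterateFrobenius F p s x)) = x := by
  rw [← iterateFrobenius_add_apply, ← iterateFrobenius_add_apply, iterateFrobenius_def,
    show s + s + s = 3 * s by ring, ← hF, FiniteField.pow_card]

theorem ne_zero_of_forall_eq_pow {ω : F} (hω : ∀ x : F, x ≠ 0 → ∃ n : ℕ, x = ω ^ n)
    (hF : Nat.card F ≠ 2) : ω ≠ 0 := by
  rintro rfl
  have hunit (u : Fˣ) : u = 1 := by
    obtain ⟨n, hn⟩ := hω u u.ne_zero
    rcases eq_or_ne n 0 with rfl | hn0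
    · exact Units.ext (by simpa using hn)
    · exact absurd (hn.trans (zero_pow hn0)) u.ne_zero
  have hcard : Nat.card Fˣ = 1 := Nat.card_eq_one_iff_unique.2
    ⟨⟨fun u v => (hunit u).trans (hunit v).symm⟩, ⟨1⟩⟩
  rw [Nat.card_units] at hcard
  omega

theorem card_units_eq_mul_Mof [Fintype F] {s : ℕ} (hF : Fintype.card F = 2 ^ (3 * s)) :
    Nat.card Fˣ = (2 ^ s - 1) * Mof s := by
  rw [Nat.card_units, Nat.card_eq_fintype_card, hF, Mof]
  zify [Nat.one_le_two_pow]
  ring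

theorem exists_isPlanarDifferenceSet_ncard_Sa [Fintype F] {s : ℕ}
    (hF : Fintype.card F = 2 ^ (3 * s)) {ω : F} (hω : ∀ x : F, x ≠ 0 → ∃ n : ℕ, x = ω ^ n) :
    ∃ D : Finset (ZMod (Mof s)), IsPlanarDifferenceSet D ∧ (∀ x ∈ D, x + x ∈ D) ∧
      ∀ a : ℤ, (Sa s ω a).ncard = (2 ^ s - 1) * D.addConvolution D a := by
  have : Fact (Nat.Prime 2) := ⟨Nat.prime_two⟩
  have : CharP F 2 := charP_of_card_eq_prime_pow hF
  have hω0 : ω ≠ 0 := ne_zero_of_forall_eq_pow hω <| by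
    rw [Nat.card_eq_fintype_card, hF, (Nat.pow_right_injective le_rfl).ne_iff' (pow_one 2)]
    omega
  lift ω to Fˣ using hω0.isUnit with g
  have hg (x : Fˣ) : x ∈ Subgroup.zpowers g := by
    obtain ⟨n, hn⟩ := hω x x.ne_zero
    exact ⟨n, Units.ext (by simpa using hn.symm)⟩
  have hcard := card_units_eq_mul_Mof hF
  have hM : Mof s ∣ Nat.card Fˣ := Dvd.intro_left _ hcard.symm
  have hquot : Nat.card Fˣ / Mof s = 2 ^ s - 1 := Nat.div_eq_of_eq_mul_left (by simp) hcard
  have hker (u : Fˣ) :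
      discreteLog hg hM (.ofMul u) = 0 ↔ iterateFrobenius F 2 s u = (u : F) := by
    rw [discreteLog_eq_zero_iff, hquot, iterateFrobenius_units_eq_self_iff]
  have hsurj := discreteLog_surjective hg hM
  have hσ := iterateFrobenius_thrice_eq_self hF
  refine ⟨traceZeroSet (iterateFrobenius F 2 s) (discreteLog hg hM),
    isPlanarDifferenceSet_traceZeroSet hker hsurj hσ, fun x hx => ?_, fun a => ?_⟩
  · simpa only [two_nsmul] using nsmul_char_mem_traceZeroSet hker 2 hx
  · rw [← hquot, ← card_ker_discreteLog hg hM, ← discreteLog_zpow hg hM a,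
      ← ncard_cubicTrace_mul_map_eq_zero_and hker hsurj hσ]
    simp only [Sa, trFE_eq_cubicTrace, pow_succ', ← iterateFrobenius_def,
      Units.val_zpow_eq_zpow_val]

theorem exists_isPlanarDifferenceSet_T_eq_sumMultiplicity [Fintype F] {s : ℕ} (hs : 1 ≤ s)
    (hF : Fintype.card F = 2 ^ (3 * s)) {ω : F} (hω : ∀ x : F, x ≠ 0 → ∃ n : ℕ, x = ω ^ n) :
    ∃ D : Finset (ZMod (Mof s)), IsPlanarDifferenceSet D ∧ (∀ x ∈ D, x + x ∈ D) ∧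
      T1 s ω = sumMultiplicity D 1 ∧ T2 s ω = sumMultiplicity D 2 ∧
        T3 s ω = sumMultiplicity D 0 := by
  obtain ⟨D, hD, hdouble, hSa⟩ := exists_isPlanarDifferenceSet_ncard_Sa hF hω
  have hpos : 0 < 2 ^ s - 1 := Nat.sub_pos_of_lt (Nat.one_lt_two_pow (by omega))
  have hmem (k : ℕ) (a : ZMod (Mof s)) :
      (Sa s ω (a.val : ℤ)).ncard = (2 ^ s - 1) * k ↔ a ∈ sumMultiplicity D k := by
    rw [hSa, Nat.mul_left_cancel_iff hpos, Int.cast_natCast, ZMod.natCast_zmod_val,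
      sumMultiplicity, Finset.mem_filter_univ]
  refine ⟨D, hD, hdouble, Set.ext fun a => ?_, Set.ext fun a => ?_, Set.ext fun a => ?_⟩
  · simpa only [T1, Set.mem_ofPred_eq, Finset.mem_coe, mul_one] using hmem 1 a
  · simpa only [T2, Set.mem_ofPred_eq, Finset.mem_coe, mul_comm] using hmem 2 a
  · simpa only [T3, Set.mem_ofPred_eq, Finset.mem_coe, mul_zero] using hmem 0 a

end SingerDifferenceSet

theorem ind_eq_ite (P : Prop) [Decidable P] : Ind P = if P then 1 else 0 := by
  rw [Ind]
  congr

theorem statement9 (s : ℕ) (hs : 1 ≤ s) (F : Type*) [Field F] [Fintype F]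
    (hF : Fintype.card F = 2 ^ (3 * s)) (ω : F)
    (hω : ∀ x : F, x ≠ 0 → ∃ n : ℕ, x = ω ^ n) :
    ∀ a : ZMod (Mof s),
      (({p : ZMod (Mof s) × ZMod (Mof s) | p.1 ∈ T2 s ω ∧ p.2 ∈ T3 s ω ∧ p.1 - p.2 = a}.ncard : ℤ) -
       ({p : ZMod (Mof s) × ZMod (Mof s) | p.1 ∈ T3 s ω ∧ p.2 ∈ T3 s ω ∧ p.1 - p.2 = a}.ncard : ℤ)) =
        -(2 ^ (2 * s - 1)) * Ind (a = 0) + 2 ^ (s - 1) * (1 - Ind (a ∈ T1 s ω)) := by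
  intro a
  obtain ⟨D, hD, hdouble, hT1, hT2, hT3⟩ :=
    exists_isPlanarDifferenceSet_T_eq_sumMultiplicity hs hF hω
  have hcard : D.card = 2 ^ s + 1 := hD.card_eq_add_one (Nat.two_pow_pos s) <| by
    rw [ZMod.card, Mof, mul_comm 2, pow_mul]
  have hident := hD.two_mul_addConvolution_sumMultiplicity_sub hdouble a
  have hsq : (2 * 2 ^ (2 * s - 1) : ℤ) = (2 ^ s) ^ 2 := by
    rw [mul_pow_sub_one (by omega), mul_comm 2, pow_mul]
  have hhalf : (2 * 2 ^ (s - 1) : ℤ) = 2 ^ s := mul_pow_sub_one (by omega) 2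
  simp only [hcard, Nat.cast_add, Nat.cast_pow, Nat.cast_ofNat, Nat.cast_one,
    add_sub_cancel_right] at hident
  simp only [hT1, hT2, hT3, Finset.mem_coe, ncard_setOf_sub_eq, ind_eq_ite,
    hD.mem_sumMultiplicity_one hdouble]
  refine mul_left_cancel₀ (two_ne_zero' ℤ) ?_
  linear_combination hident + (if a = 0 then 1 else 0) * hsq -
    (1 - if a ∈ D then 1 else 0) * hhalf
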